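/- Suppose p = Σᵢ₌₁ˢ qᵢ² in ℝ[x₁,…,xₙ] and F is a face of the Newton polytope New(p). Let F_{z/2} = (½F) ∩ ℕⁿ, qᵢ' = Proj(qᵢ, F_{z/2}), qᵢ'' = qᵢ − qᵢ', Tᵢ' = Support(qᵢ'), Tᵢ'' = Support(qᵢ''). Then there exists an affine function π on ℝⁿ such that (1) F ⊆ {y : π(y) = 0}, (2) 2Tᵢ' ⊆ {y : π(y) = 0} for every i, and (3) 2Tᵢ'' ⊆ {y : π(y) > 0} for every i (where 2S = {2a : a ∈ S} and ½F = {a/2 : a ∈ F}). -/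

import Mathlib

open MvPolynomial
open scoped Classical

noncomputable section

/-- Embed an exponent vector `a ∈ ℕⁿ` into `ℝⁿ`. -/
def toR {n : ℕ} (a : Fin n →₀ ℕ) : Fin n → ℝ := fun i => (a i : ℝ)

/-- `p` is a sum of squares of polynomials. -/
def IsSOS {n : ℕ} (p : MvPolynomial (Fin n) ℝ) : Prop :=
  ∃ (s : ℕ) (q : Fin s → MvPolynomial (Fin n) ℝ), p = ∑ i, (q i) ^ 2

/-- `Proj(p,T)` for `T ⊆ ℝⁿ`: delete every term of `p` whose exponent vector is not in `T`. -/
def projR {n : ℕ} (p : MvPolynomial (Fin n) ℝ) (T : Set (Fin n → ℝ)) :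
    MvPolynomial (Fin n) ℝ :=
  ∑ a ∈ p.support, if toR a ∈ T then monomial a (p.coeff a) else 0

/-- `Proj(p,T)` for `T ⊆ ℕⁿ`. -/
def projN {n : ℕ} (p : MvPolynomial (Fin n) ℝ) (T : Set (Fin n →₀ ℕ)) :
    MvPolynomial (Fin n) ℝ :=
  ∑ a ∈ p.support, if a ∈ T then monomial a (p.coeff a) else 0

/-- The Newton polytope of `p`: convex hull of its support in `ℝⁿ`. -/
def newton {n : ℕ} (p : MvPolynomial (Fin n) ℝ) : Set (Fin n → ℝ) :=
  convexHull ℝ (toR '' ↑p.support)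

/-- `F` is an (exposed) face of `N`: `F ⊆ N`, and either `F = N` or there is an
affine function vanishing on `F` and strictly positive on `N \ F`. -/
def IsFace {n : ℕ} (N F : Set (Fin n → ℝ)) : Prop :=
  F ⊆ N ∧ (F = N ∨ ∃ π : (Fin n → ℝ) →ᵃ[ℝ] ℝ,
    (∀ x ∈ F, π x = 0) ∧ ∀ x ∈ N \ F, 0 < π x)

/-- `SOSS(p,G)`: whenever `p` is SOS, it has an SOS decomposition all of whose
summands have support contained in `G`. -/
def SOSS {n : ℕ} (p : MvPolynomial (Fin n) ℝ) (G : Finset (Fin n →₀ ℕ)) : Prop :=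
  IsSOS p → ∃ (s : ℕ) (q : Fin s → MvPolynomial (Fin n) ℝ),
    p = ∑ i, (q i) ^ 2 ∧ ∀ i, (q i).support ⊆ G

/-- `V(p,G)`: elements `a ∈ G` whose double has the unique decomposition `a + a` in `G + G`. -/
def VSet {n : ℕ} (G : Finset (Fin n →₀ ℕ)) : Set (Fin n →₀ ℕ) :=
  {a | a ∈ G ∧ ∀ b ∈ G, ∀ r ∈ G, b + r = a + a → b = a ∧ r = a}

/-- Membership in `Relat(a)` (least fixed point of the recursive definition):
`Relat(a) = {a/2}` if the unique decomposition of `a` in `G + G` is `a/2 + a/2`;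
otherwise `Relat(a)` is the union of `Relat(2b) ∪ Relat(2r)` over decompositions
`a = b + r` with `b ≠ r`, `b, r ∈ G`; and `Relat(a) = ∅` if `a ∉ G + G`. -/
inductive RelatMem {n : ℕ} (G : Finset (Fin n →₀ ℕ)) :
    (Fin n →₀ ℕ) → (Fin n →₀ ℕ) → Prop
  | base (a c : Fin n →₀ ℕ) (hc : c ∈ G) (hcc : c + c = a)
      (huniq : ∀ b ∈ G, ∀ r ∈ G, b + r = a → b = c) : RelatMem G a c
  | stepL (a b r v : Fin n →₀ ℕ) (hb : b ∈ G) (hr : r ∈ G) (hne : b ≠ r)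
      (hbr : b + r = a) (hv : RelatMem G (b + b) v) : RelatMem G a v
  | stepR (a b r v : Fin n →₀ ℕ) (hb : b ∈ G) (hr : r ∈ G) (hne : b ≠ r)
      (hbr : b + r = a) (hv : RelatMem G (r + r) v) : RelatMem G a v

/-- `Relat(a)` as a set. -/
def Relat {n : ℕ} (G : Finset (Fin n →₀ ℕ)) (a : Fin n →₀ ℕ) : Set (Fin n →₀ ℕ) :=
  {v | RelatMem G a v}

/-- `σ(T) = {r ∈ G : Relat(2r) ⊆ T}`. -/
def sigmaSet {n : ℕ} (G : Finset (Fin n →₀ ℕ)) (T : Set (Fin n →₀ ℕ)) :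
    Set (Fin n →₀ ℕ) :=
  {r | r ∈ G ∧ Relat G (r + r) ⊆ T}

/-- `p` is a split polynomial with respect to `T₁, …, T_u ⊆ V(p,G)`. -/
def IsSplit {n : ℕ} (p : MvPolynomial (Fin n) ℝ) (G : Finset (Fin n →₀ ℕ))
    (u : ℕ) (T : Fin u → Set (Fin n →₀ ℕ)) : Prop :=
  SOSS p G ∧ (∀ i, T i ⊆ VSet G) ∧ (∀ i, (T i).Nonempty) ∧
  (∀ i j, i ≠ j → Disjoint (T i) (T j)) ∧
  (∀ i, ∀ a ∈ sigmaSet G (T i), ∀ b ∈ sigmaSet G (T i), Relat G (a + b) ⊆ T i) ∧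
  ∀ a ∈ p.support, ∃! i, Relat G a ⊆ T i

/-- The sub-polynomial `Σ_{a ∈ Support(p), Relat(a) ⊆ T} c_a x^a` of `p`. -/
def projRelat {n : ℕ} (p : MvPolynomial (Fin n) ℝ) (G : Finset (Fin n →₀ ℕ))
    (T : Set (Fin n →₀ ℕ)) : MvPolynomial (Fin n) ℝ :=
  ∑ a ∈ p.support, if Relat G a ⊆ T then monomial a (p.coeff a) else 0

/-- `p` is a convex cover polynomial: some pairwise disjoint faces of `New(p)`
cover `Support(p)`. -/
def IsConvexCover {n : ℕ} (p : MvPolynomial (Fin n) ℝ) : Prop :=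
  ∃ (u : ℕ) (F : Fin u → Set (Fin n → ℝ)),
    (∀ i, IsFace (newton p) (F i)) ∧
    (∀ i j, i ≠ j → Disjoint (F i) (F j)) ∧
    toR '' ↑p.support ⊆ ⋃ i, F i

end

theorem toR_inj {n : ℕ} {a b : Fin n →₀ ℕ} (h : toR a = toR b) : a = b := by
  ext i
  have := congrFun h i
  simpa [toR] using this

theorem toR_add {n : ℕ} (a b : Fin n →₀ ℕ) : toR (a + b) = toR a + toR b := by
  ext i
  simp [toR]

theorem coeff_sq_ext {n : ℕ} (q : MvPolynomial (Fin n) ℝ) (v : Fin n →₀ ℕ)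
    (h : ∀ b ∈ q.support, ∀ c ∈ q.support, b + c = v + v → b = v ∧ c = v) :
    coeff (v + v) (q ^ 2) = coeff v q ^ 2 := by
  rw [sq, MvPolynomial.coeff_mul, Finset.sum_eq_single (v, v)]
  · simp [sq]
  · rintro ⟨b, c⟩ hbc hne
    by_contra hz
    have hb : b ∈ q.support := by
      rw [MvPolynomial.mem_support_iff]
      intro h0
      exact hz (by simp [h0])
    have hc : c ∈ q.support := by
      rw [MvPolynomial.mem_support_iff]
      intro h0
      exact hz (by simp [h0])
    obtain ⟨h1, h2⟩ := h b hb c hc (by simpa using hbc)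
    exact hne (by rw [h1, h2])
  · intro h0
    exact absurd (by simp) h0

theorem double_mem_newton {n : ℕ} (p : MvPolynomial (Fin n) ℝ) (s : ℕ)
    (q : Fin s → MvPolynomial (Fin n) ℝ) (hp : p = ∑ i, (q i) ^ 2)
    (i : Fin s) (a : Fin n →₀ ℕ) (ha : a ∈ (q i).support) :
    toR a + toR a ∈ newton p := by
  set S : Set (Fin n → ℝ) := ⋃ j, toR '' ((q j).support : Set (Fin n →₀ ℕ)) with hS
  have hSf : S.Finite := Set.finite_iUnion fun j => (Finset.finite_toSet _).image _
  have hmem : ∀ j, ∀ b ∈ (q j).support, toR b ∈ convexHull ℝ S := fun j b hb =>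
    subset_convexHull ℝ S (Set.mem_iUnion.2 ⟨j, b, hb, rfl⟩)
  have hext : (convexHull ℝ S).extremePoints ℝ ⊆ S := extremePoints_convexHull_subset
  have hKM : convexHull ℝ ((convexHull ℝ S).extremePoints ℝ) = convexHull ℝ S := by
    have h1 := closure_convexHull_extremePoints (hSf.isCompact_convexHull (𝕜 := ℝ))
      (convex_convexHull ℝ S)
    rwa [((hSf.subset hext).isClosed_convexHull (𝕜 := ℝ)).closure_eq] at h1
  have hsub : (convexHull ℝ S).extremePoints ℝ ⊆
      (LinearMap.lsmul ℝ (Fin n → ℝ) (2 : ℝ)) ⁻¹' newton p := by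
    intro x hx
    obtain ⟨j, v, hv, rfl⟩ := Set.mem_iUnion.1 (hext hx)
    have key : ∀ k, coeff (v + v) (q k ^ 2) = coeff v (q k) ^ 2 := by
      intro k
      apply coeff_sq_ext
      intro b hb c hc hbc
      have hsum : toR b + toR c = toR v + toR v := by rw [← toR_add, ← toR_add, hbc]
      have hseg : toR v ∈ openSegment ℝ (toR b) (toR c) := by
        refine ⟨1/2, 1/2, by norm_num, by norm_num, by norm_num, ?_⟩
        rw [← smul_add, hsum, ← two_smul ℝ (toR v), smul_smul]
        norm_num
      have h1 := (mem_extremePoints.1 hx).2 _ (hmem k b hb) _ (hmem k c hc) hseg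
      exact ⟨toR_inj h1.1, toR_inj h1.2⟩
    have hpos : 0 < coeff (v + v) p := by
      rw [hp, MvPolynomial.coeff_sum]
      simp only [key]
      refine Finset.sum_pos' (fun k _ => sq_nonneg _) ⟨j, Finset.mem_univ _, ?_⟩
      have : coeff v (q j) ≠ 0 := MvPolynomial.mem_support_iff.1 hv
      positivity
    have : toR (v + v) ∈ newton p :=
      subset_convexHull ℝ _ ⟨v + v, MvPolynomial.mem_support_iff.2 hpos.ne', rfl⟩
    rw [toR_add] at this
    simpa [two_smul] using this
  have h2 : toR a ∈ (LinearMap.lsmul ℝ (Fin n → ℝ) (2 : ℝ)) ⁻¹' newton p := by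
    refine convexHull_min hsub ((convex_convexHull ℝ _).linear_preimage _) ?_
    rw [hKM]
    exact hmem i a ha
  simpa [two_smul] using h2

theorem coeff_projR {n : ℕ} (p : MvPolynomial (Fin n) ℝ) (T : Set (Fin n → ℝ))
    (a : Fin n →₀ ℕ) : coeff a (projR p T) = if toR a ∈ T then coeff a p else 0 := by
  unfold projR
  rw [MvPolynomial.coeff_sum, Finset.sum_eq_single a]
  · split_ifs <;> simp
  · intro b _ hb
    split_ifs <;> simp [hb]
  · intro h
    have : coeff a p = 0 := by simpa using h
    simp [this]

open scoped Pointwise in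
/-- separating affine function for a face of the Newton polytope of an SOS
polynomial `p = Σ qᵢ²`, vanishing on `F` and on the doubled supports of
`qᵢ' = Proj(qᵢ, ½F ∩ ℕⁿ)`, and positive on the doubled supports of `qᵢ'' = qᵢ - qᵢ'`. -/
theorem statement1 {n : ℕ} (p : MvPolynomial (Fin n) ℝ) (s : ℕ)
    (q : Fin s → MvPolynomial (Fin n) ℝ) (hp : p = ∑ i, (q i) ^ 2)
    (F : Set (Fin n → ℝ)) (hF : IsFace (newton p) F) :
    ∃ π : (Fin n → ℝ) →ᵃ[ℝ] ℝ,
      (∀ x ∈ F, π x = 0) ∧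
      (∀ i, ∀ a ∈ (projR (q i) ((2⁻¹ : ℝ) • F)).support, π (toR a + toR a) = 0) ∧
      (∀ i, ∀ a ∈ (q i - projR (q i) ((2⁻¹ : ℝ) • F)).support, 0 < π (toR a + toR a)) := by
  have h1 : ∀ i, ∀ a ∈ (projR (q i) ((2⁻¹ : ℝ) • F)).support, toR a + toR a ∈ F := by
    intro i a ha
    rw [MvPolynomial.mem_support_iff, coeff_projR] at ha
    have hm : toR a ∈ (2⁻¹ : ℝ) • F := by
      by_contra h
      exact ha (if_neg h)
    rw [Set.mem_inv_smul_set_iff₀ two_ne_zero, two_smul] at hm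
    exact hm
  have h2 : ∀ i, ∀ a ∈ (q i - projR (q i) ((2⁻¹ : ℝ) • F)).support,
      toR a + toR a ∈ newton p \ F := by
    intro i a ha
    rw [MvPolynomial.mem_support_iff, MvPolynomial.coeff_sub, coeff_projR] at ha
    have hm : toR a ∉ (2⁻¹ : ℝ) • F := by
      intro h
      exact ha (by rw [if_pos h, sub_self])
    rw [if_neg hm, sub_zero] at ha
    rw [Set.mem_inv_smul_set_iff₀ two_ne_zero, two_smul] at hm
    exact ⟨double_mem_newton p s q hp i a (MvPolynomial.mem_support_iff.2 ha), hm⟩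
  obtain ⟨_, rfl | ⟨π, hπ0, hπ⟩⟩ := hF
  · exact ⟨0, fun _ _ => rfl, fun _ _ _ => rfl, fun i a ha => absurd (h2 i a ha).1 (h2 i a ha).2⟩
  · exact ⟨π, hπ0, fun i a ha => hπ0 _ (h1 i a ha), fun i a ha => hπ _ (h2 i a ha)⟩
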